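/- arXiv:2605.08036 — 6 statements merged into one kernel-verified Lean document; each statement's English description precedes it below -/
import Mathlib

section
/- Let ι be a finite type equipped with a preorder ≤ and let A be an invertible ι-by-ι real matrix. If A is lower ≤-triangular, then its inverse A⁻¹ is also lower ≤-triangular. -/
/-- If an invertible matrix over a finite preordered index type is
lower `≤`-triangular, then so is its inverse. -/
theorem inv_lower_triangular {ι : Type*} [Fintype ι] [DecidableEq ι] [Preorder ι]
    (A : Matrix ι ι ℝ) (hA : IsUnit A) (hTri : ∀ i j, A i j ≠ 0 → j ≤ i) :
    ∀ i j, A⁻¹ i j ≠ 0 → j ≤ i := by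
  classical
  intro i j hij
  by_contra hn
  apply hij
  haveI := hA.invertible
  have hb : Matrix.BlockTriangular A (fun k => if j ≤ k then (0 : ℕ) else 1) := by
    intro r c hrc
    by_contra hne
    have hcr := hTri r c hne
    by_cases hc : j ≤ c
    · have hr : j ≤ r := hc.trans hcr
      simp [hc, hr] at hrc
    · simp only [hc, if_false] at hrc
      split_ifs at hrc <;> omega
  have h := Matrix.blockTriangular_inv_of_blockTriangular hb
  exact h (by simp [hn])
end

section
/- Let ι be a finite type equipped with a preorder ≤, let S be a downward-closed subset of ι, and let A be an invertible ι-by-ι real matrix which is lower ≤-triangular. Then the chop Â of A to S is invertible, and its inverse equals the chop of A⁻¹ to S, i.e. Â⁻¹ = (A⁻¹)^. -/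
/-- For a downward-closed subset `S` of a finite preordered index type and an
invertible lower `≤`-triangular matrix `A`, the chop `Â` is invertible and `Â⁻¹ = (A⁻¹)^`. -/
theorem chop_inv_of_lower_triangular {ι : Type*} [Fintype ι] [DecidableEq ι] [Preorder ι]
    (S : Finset ι) (hS : ∀ ⦃i j : ι⦄, i ≤ j → j ∈ S → i ∈ S)
    (A : Matrix ι ι ℝ) (hA : IsUnit A) (hTri : ∀ i j, A i j ≠ 0 → j ≤ i) :
    IsUnit (A.submatrix (fun i : ↥S => (i : ι)) (fun j : ↥S => (j : ι))) ∧
      (A.submatrix (fun i : ↥S => (i : ι)) (fun j : ↥S => (j : ι)))⁻¹ =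
        (A⁻¹).submatrix (fun i : ↥S => (i : ι)) (fun j : ↥S => (j : ι)) := by
  have hdet : IsUnit A.det := (Matrix.isUnit_iff_isUnit_det A).1 hA
  have hmul : A * A⁻¹ = 1 := Matrix.mul_nonsing_inv A hdet
  have key : (A.submatrix (fun i : ↥S => (i : ι)) (fun j : ↥S => (j : ι))) *
      ((A⁻¹).submatrix (fun i : ↥S => (i : ι)) (fun j : ↥S => (j : ι))) = 1 := by
    ext i k
    have h := congrFun (congrFun hmul (i : ι)) (k : ι)
    rw [Matrix.mul_apply] at h ⊢
    simp only [Matrix.submatrix_apply]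
    rw [Finset.sum_coe_sort S (fun j => A i j * A⁻¹ j k),
      Finset.sum_subset (Finset.subset_univ S), h]
    · simp only [Matrix.one_apply, Subtype.coe_inj]
    · intro j _ hj
      have h0 : A i j = 0 := by
        by_contra hne
        exact hj (hS (hTri _ _ hne) i.2)
      rw [h0, zero_mul]
  exact ⟨IsUnit.of_mul_eq_one _ key, Matrix.inv_eq_right_inv key⟩
end

section
/- Let D be a natural number, n : Fin D → ℕ with n d ≥ 1 for all d, and for each d let K⁽ᵈ⁾ be an (n d)-by-(n d) real matrix. Let L⁽ᵈ⁾, R⁽ᵈ⁾, U⁽ᵈ⁾ be the matrices with L⁽ᵈ⁾ i j = 1 if j = 0 or j = i (else 0), R⁽ᵈ⁾ i j = 1 if i = 0 and j = 0 (else 0), and U⁽ᵈ⁾ i j = 1 if i = 0 or j = i (else 0), and set M⁽ᵈ⁾ = (L⁽ᵈ⁾)⁻¹·K⁽ᵈ⁾·(U⁽ᵈ⁾)⁻¹. Let 𝓜 be a finite collection of subsets of Fin D and σ : ℕ → ℝ. Consider matrices indexed by the product index set of all multi-indices i with i d ∈ Fin (n d): define K by K i j = Σ_{m ∈ 𝓜}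 σ(|m|) · Π_{d ∈ m} K⁽ᵈ⁾ (i d) (j d); define 𝐋 by 𝐋 i j = Π_{d} L⁽ᵈ⁾ (i d) (j d); define 𝐔 by 𝐔 i j = Π_{d} U⁽ᵈ⁾ (i d) (j d); and define 𝐌 by 𝐌 i j = Σ_{m ∈ 𝓜} σ(|m|) · Π_{d ∈ m} M⁽ᵈ⁾ (i d) (j d) · Π_{d ∉ m} R⁽ᵈ⁾ (i d) (j d). Then K = 𝐋 · 𝐌 · 𝐔. -/
/-- Kronecker product over a finite family. -/
noncomputable def kronFam {D : ℕ} {n : Fin D → ℕ}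
    (A : (d : Fin D) → Matrix (Fin (n d)) (Fin (n d)) ℝ) :
    Matrix ((d : Fin D) → Fin (n d)) ((d : Fin D) → Fin (n d)) ℝ :=
  fun i j => ∏ d, A d (i d) (j d)

lemma kronFam_mul {D : ℕ} {n : Fin D → ℕ}
    (A B : (d : Fin D) → Matrix (Fin (n d)) (Fin (n d)) ℝ) :
    kronFam A * kronFam B = kronFam (fun d => A d * B d) := by
  ext i j
  simp only [Matrix.mul_apply, kronFam, ← Finset.prod_mul_distrib]
  rw [Finset.prod_univ_sum, Fintype.piFinset_univ]

lemma det_L_eq_one {n : ℕ} (L : Matrix (Fin n) (Fin n) ℝ)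
    (hL : ∀ i j, L i j = if (j : ℕ) = 0 ∨ j = i then 1 else 0) : L.det = 1 := by
  rw [Matrix.det_of_isLowerTriangular]
  · simp [hL]
  · intro i j h
    have h : i < j := h
    rw [hL, if_neg]
    rw [Fin.lt_def] at h
    rw [Fin.ext_iff]
    omega

lemma L_R_U {n : ℕ} (hn : 1 ≤ n) (L R U : Matrix (Fin n) (Fin n) ℝ)
    (hL : ∀ i j, L i j = if (j : ℕ) = 0 ∨ j = i then 1 else 0)
    (hR : ∀ i j, R i j = if (i : ℕ) = 0 ∧ (j : ℕ) = 0 then 1 else 0)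
    (hU : ∀ i j, U i j = if (i : ℕ) = 0 ∨ j = i then 1 else 0) (i j : Fin n) :
    (L * R * U) i j = 1 := by
  obtain ⟨k, rfl⟩ : ∃ k, n = k + 1 := ⟨n - 1, by omega⟩
  have h1 : ∀ a, (L * R) i a = if a = 0 then 1 else 0 := by
    intro a
    rw [Matrix.mul_apply, Finset.sum_eq_single 0]
    · simp [hL, hR]
    · intro b _ hb
      simp [hR, hb]
    · simp
  rw [Matrix.mul_apply, Finset.sum_eq_single 0]
  · simp [h1, hU]
  · intro b _ hb
    simp [h1, hb]
  · simp

/-- The additive kernel matrix over a complete product grid factorizes as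
`K = 𝐋 * 𝐌 * 𝐔`, where `𝐋`, `𝐔` are the Kronecker products of the 1D factors `L⁽ᵈ⁾`,
`U⁽ᵈ⁾` of the all-ones matrices `J⁽ᵈ⁾ = L⁽ᵈ⁾ R⁽ᵈ⁾ U⁽ᵈ⁾`, and
`𝐌 = Σ_m σ(|m|) M^{[m]} R^{[¬m]}` with `M⁽ᵈ⁾ = (L⁽ᵈ⁾)⁻¹ K⁽ᵈ⁾ (U⁽ᵈ⁾)⁻¹`. -/
theorem additive_kernel_factorization (D : ℕ) (n : Fin D → ℕ) (hn : ∀ d, 1 ≤ n d)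
    (K : (d : Fin D) → Matrix (Fin (n d)) (Fin (n d)) ℝ)
    (𝓜 : Finset (Finset (Fin D))) (σ : ℕ → ℝ)
    (L R U : (d : Fin D) → Matrix (Fin (n d)) (Fin (n d)) ℝ)
    (hL : ∀ d i j, L d i j = if (j : ℕ) = 0 ∨ j = i then 1 else 0)
    (hR : ∀ d i j, R d i j = if (i : ℕ) = 0 ∧ (j : ℕ) = 0 then 1 else 0)
    (hU : ∀ d i j, U d i j = if (i : ℕ) = 0 ∨ j = i then 1 else 0)
    (M : (d : Fin D) → Matrix (Fin (n d)) (Fin (n d)) ℝ)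
    (hM : ∀ d, M d = (L d)⁻¹ * K d * (U d)⁻¹)
    (bigK bigL bigU bigM :
      Matrix ((d : Fin D) → Fin (n d)) ((d : Fin D) → Fin (n d)) ℝ)
    (hbigK : ∀ i j, bigK i j = ∑ m ∈ 𝓜, σ m.card * ∏ d ∈ m, K d (i d) (j d))
    (hbigL : ∀ i j, bigL i j = ∏ d, L d (i d) (j d))
    (hbigU : ∀ i j, bigU i j = ∏ d, U d (i d) (j d))
    (hbigM : ∀ i j, bigM i j = ∑ m ∈ 𝓜, σ m.card *
        ((∏ d ∈ m, M d (i d) (j d)) * ∏ d ∈ mᶜ, R d (i d) (j d))) :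
    bigK = bigL * bigM * bigU := by
  have eL : bigL = kronFam L := by ext i j; exact hbigL i j
  have eU : bigU = kronFam U := by ext i j; exact hbigU i j
  have eM : bigM = ∑ m ∈ 𝓜, σ m.card • kronFam (fun d => if d ∈ m then M d else R d) := by
    ext i j
    rw [hbigM, Matrix.sum_apply]
    refine Finset.sum_congr rfl fun m _ => ?_
    rw [Matrix.smul_apply, smul_eq_mul, kronFam, ← Finset.prod_mul_prod_compl m]
    congr 2
    · exact Finset.prod_congr rfl fun d hd => by rw [if_pos hd]
    · exact Finset.prod_congr rfl fun d hd => by rw [if_neg (Finset.mem_compl.mp hd)]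
  have dL : ∀ d, IsUnit (L d).det := fun d => by simp [det_L_eq_one (L d) (hL d)]
  have dU : ∀ d, IsUnit (U d).det := fun d => by
    have : (Matrix.transpose (U d)).det = 1 := by
      apply det_L_eq_one
      intro i j
      rw [Matrix.transpose_apply, hU]
      simp only [eq_comm (a := i) (b := j)]
    rw [← Matrix.det_transpose, this]
    exact isUnit_one
  have hLMU : ∀ d, L d * M d * U d = K d := fun d => by
    rw [hM, Matrix.mul_assoc (L d)⁻¹, Matrix.mul_nonsing_inv_cancel_left _ _ (dL d),
      Matrix.nonsing_inv_mul_cancel_right _ _ (dU d)]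
  rw [eL, eU, eM, Finset.mul_sum, Finset.sum_mul]
  ext i j
  rw [hbigK, Matrix.sum_apply]
  refine Finset.sum_congr rfl fun m _ => ?_
  rw [Matrix.mul_smul, Matrix.smul_mul, Matrix.smul_apply, smul_eq_mul, kronFam_mul,
    kronFam_mul, kronFam, ← Finset.prod_mul_prod_compl m]
  congr 1
  rw [Finset.prod_eq_one (s := mᶜ), mul_one]
  · exact Finset.prod_congr rfl fun d hd => by rw [if_pos hd, hLMU]
  · intro d hd
    rw [if_neg (Finset.mem_compl.mp hd)]
    exact L_R_U (hn d) _ _ _ (hL d) (hR d) (hU d) _ _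
end

section
/- Let N be a natural number, y : Fin N → ℝ, and C : ℝ → Matrix (Fin N) (Fin N) ℝ such that each entry of C has a derivative at θ₀ (entrywise, C has derivative C' at θ₀), C θ₀ is symmetric and invertible, and det (C θ₀) > 0. Define L : ℝ → ℝ by L θ = −(1/2)·( yᵀ·(C θ)⁻¹·y + Real.log (det (C θ)) + N·Real.log (2π) ). Then L has derivative at θ₀ equal to (1/2)·αᵀ·C'·α − (1/2)·trace((C θ₀)⁻¹·C'), where α = (C θ₀)⁻¹·y. -/
open Matrix


theorem aux_det (N : ℕ) (θ₀ : ℝ) (C : ℝ → Matrix (Fin N) (Fin N) ℝ)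
    (C' : Matrix (Fin N) (Fin N) ℝ)
    (hderiv : ∀ i j, HasDerivAt (fun θ => C θ i j) (C' i j) θ₀) :
    HasDerivAt (fun θ => (C θ).det) (((C θ₀).adjugate * C').trace) θ₀ := by
  have h1 : HasDerivAt (fun θ => (C θ).det)
      (∑ σ : Equiv.Perm (Fin N), ((Equiv.Perm.sign σ : ℤ) : ℝ) *
        ∑ i, (∏ j ∈ Finset.univ.erase i, C θ₀ (σ j) j) • C' (σ i) i) θ₀ := by
    simp only [Matrix.det_apply']
    refine HasDerivAt.fun_sum fun σ _ => HasDerivAt.const_mul _ ?_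
    exact HasDerivAt.fun_finsetProd fun i _ => hderiv (σ i) i
  convert h1 using 1
  have h2 : ∀ i, ((C θ₀).adjugate * C') i i = ((C θ₀).updateCol i (fun k => C' k i)).det := by
    intro i
    rw [← Matrix.cramer_apply, Matrix.cramer_eq_adjugate_mulVec]
    rfl
  simp only [Matrix.trace, Matrix.diag, h2, Matrix.det_apply', Finset.mul_sum]
  rw [Finset.sum_comm]
  refine Finset.sum_congr rfl fun σ _ => Finset.sum_congr rfl fun i _ => ?_
  rw [← Finset.prod_erase_mul _ _ (Finset.mem_univ i), smul_eq_mul]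
  congr 2
  · refine Finset.prod_congr rfl fun j hj => ?_
    rw [Matrix.updateCol_ne (Finset.ne_of_mem_erase hj)]
  · simp

theorem aux_inv (N : ℕ) (θ₀ : ℝ) (C : ℝ → Matrix (Fin N) (Fin N) ℝ)
    (C' : Matrix (Fin N) (Fin N) ℝ)
    (hderiv : ∀ i j, HasDerivAt (fun θ => C θ i j) (C' i j) θ₀) (hdet : 0 < (C θ₀).det)
    (i j : Fin N) :
    HasDerivAt (fun θ => (C θ)⁻¹ i j) ((-((C θ₀)⁻¹ * C' * (C θ₀)⁻¹)) i j) θ₀ := by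
  have hd := aux_det N θ₀ C C' hderiv
  have hdiff : ∀ i j, DifferentiableAt ℝ (fun θ => (C θ)⁻¹ i j) θ₀ := by
    intro i j
    have ha : DifferentiableAt ℝ (fun θ => (C θ).adjugate i j) θ₀ := by
      simp only [Matrix.adjugate_apply]
      refine (aux_det N θ₀ (fun θ => (C θ).updateRow j (Pi.single i 1))
        (C'.updateRow j 0) ?_).differentiableAt
      intro a b
      by_cases h : a = j
      · subst h
        simpa using hasDerivAt_const θ₀ _
      · simpa [Matrix.updateRow_ne h] using hderiv a b
    have := (hd.differentiableAt.fun_inv hdet.ne').fun_mul ha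
    simpa [Matrix.inv_def] using this
  let D : Matrix (Fin N) (Fin N) ℝ := fun i j => deriv (fun θ => (C θ)⁻¹ i j) θ₀
  have hD : ∀ i j, HasDerivAt (fun θ => (C θ)⁻¹ i j) (D i j) θ₀ := fun i j =>
    (hdiff i j).hasDerivAt
  have hu : IsUnit (C θ₀).det := hdet.ne'.isUnit
  have key : C' * (C θ₀)⁻¹ + C θ₀ * D = 0 := by
    ext a b
    have h1 : HasDerivAt (fun θ => (C θ * (C θ)⁻¹) a b)
        ((C' * (C θ₀)⁻¹ + C θ₀ * D) a b) θ₀ := by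
      simp only [Matrix.add_apply, Matrix.mul_apply, ← Finset.sum_add_distrib]
      exact HasDerivAt.fun_sum fun k _ => (hderiv a k).fun_mul (hD k b)
    have h2 : (fun θ => (C θ * (C θ)⁻¹) a b) =ᶠ[nhds θ₀]
        fun _ => (1 : Matrix (Fin N) (Fin N) ℝ) a b := by
      filter_upwards [hd.continuousAt.eventually_ne hdet.ne'] with θ hθ
      rw [Matrix.mul_nonsing_inv _ (isUnit_iff_ne_zero.2 hθ)]
    exact h1.unique ((hasDerivAt_const θ₀ _).congr_of_eventuallyEq h2)
  have hDe : D = -((C θ₀)⁻¹ * C' * (C θ₀)⁻¹) := by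
    have h := congrArg (fun M => (C θ₀)⁻¹ * M) key
    simp only [mul_add, Matrix.mul_zero, ← mul_assoc, Matrix.nonsing_inv_mul _ hu, one_mul] at h
    exact eq_neg_of_add_eq_zero_right h
  rw [← hDe]
  exact hD i j

/-- The derivative of the Gaussian process marginal log-likelihood
`L θ = -(1/2)(yᵀ (C θ)⁻¹ y + log det (C θ) + N log 2π)` with respect to the
hyperparameter `θ` at `θ₀` is `(1/2) αᵀ C' α - (1/2) tr((C θ₀)⁻¹ C')`, where
`α = (C θ₀)⁻¹ y` and `C'` is the entrywise derivative of `C` at `θ₀`. -/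
theorem mll_gradient (N : ℕ) (y : Fin N → ℝ) (θ₀ : ℝ)
    (C : ℝ → Matrix (Fin N) (Fin N) ℝ) (C' : Matrix (Fin N) (Fin N) ℝ)
    (hderiv : ∀ i j, HasDerivAt (fun θ => C θ i j) (C' i j) θ₀)
    (hsymm : (C θ₀).IsSymm) (hunit : IsUnit (C θ₀)) (hdet : 0 < (C θ₀).det)
    (L : ℝ → ℝ)
    (hL : ∀ θ, L θ = -(1 / 2) * ((∑ i, ∑ j, y i * (C θ)⁻¹ i j * y j)
        + Real.log (C θ).det + (N : ℝ) * Real.log (2 * Real.pi))) :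
    HasDerivAt L
      ((1 / 2) * (∑ i, ∑ j, ((C θ₀)⁻¹.mulVec y) i * C' i j * ((C θ₀)⁻¹.mulVec y) j)
        - (1 / 2) * ((C θ₀)⁻¹ * C').trace) θ₀ := by
  have hd := (aux_det N θ₀ C C' hderiv).log hdet.ne'
  have hq : HasDerivAt (fun θ => ∑ i, ∑ j, y i * (C θ)⁻¹ i j * y j)
      (∑ i, ∑ j, y i * (-((C θ₀)⁻¹ * C' * (C θ₀)⁻¹)) i j * y j) θ₀ :=
    HasDerivAt.fun_sum fun i _ => HasDerivAt.fun_sum fun j _ =>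
      ((aux_inv N θ₀ C C' hderiv hdet i j).const_mul (y i)).mul_const (y j)
  have hquad : ∀ (M : Matrix (Fin N) (Fin N) ℝ) (v : Fin N → ℝ),
      ∑ i, ∑ j, v i * M i j * v j = v ⬝ᵥ (M *ᵥ v) := by
    intro M v
    simp only [dotProduct, Matrix.mulVec, Finset.mul_sum, mul_assoc]
  have hall := ((hq.fun_add hd).add_const ((N : ℝ) * Real.log (2 * Real.pi))).const_mul (-(1 / 2))
  rw [show L = _ from funext hL]
  refine hall.congr_deriv (Eq.symm ?_)
  have hs : ((C θ₀)⁻¹)ᵀ = (C θ₀)⁻¹ := by rw [Matrix.transpose_nonsing_inv, hsymm.eq]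
  have ht : ((C θ₀)⁻¹ * C').trace = ((C θ₀).adjugate * C').trace / (C θ₀).det := by
    rw [Matrix.inv_def, Matrix.smul_mul, Matrix.trace_smul, Ring.inverse_eq_inv', smul_eq_mul]
    ring
  have hα : ((C θ₀)⁻¹ *ᵥ y) ⬝ᵥ (C' *ᵥ ((C θ₀)⁻¹ *ᵥ y))
      = y ⬝ᵥ (((C θ₀)⁻¹ * C' * (C θ₀)⁻¹) *ᵥ y) := by
    rw [← Matrix.mulVec_mulVec, ← Matrix.mulVec_mulVec, Matrix.dotProduct_mulVec y,
      ← Matrix.mulVec_transpose, hs]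
  rw [hquad, hquad, ht, hα, Matrix.neg_mulVec, dotProduct_neg]
  ring
end

section
/- Let D be a natural number, n : Fin D → ℕ, and for each d let L⁽ᵈ⁾ and U⁽ᵈ⁾ be (n d)-by-(n d) real matrices with L⁽ᵈ⁾ lower triangular and U⁽ᵈ⁾ upper triangular with respect to the natural order on Fin (n d). Let S be a set of multi-indices (functions i with i d ∈ Fin (n d)) that is downward closed with respect to the coordinatewise order. For each d define the one-mode bracket matrices 𝐋⁽ᵈ⁾ i j = L⁽ᵈ⁾ (i d) (j d) · Π_{d' ≠ d} (if i d' = j d' then 1 else 0) and 𝐔⁽ᵈ⁾ i j = U⁽ᵈ⁾ (i d) (j d) · Π_{d' ≠ d} (if i d' = j d' then 1 else 0), and let 𝐀 i j = Π_{d} (L⁽ᵈ⁾·U⁽ᵈ⁾) (i d) (j d). Then the chop of 𝐀 to S equals the ordered product over d = 0, …, D−1 of the chops of the 𝐋⁽ᵈ⁾ to S, followed by the ordered product over d = 0, …, D−1 of the chops of the 𝐔⁽ᵈ⁾ to S. -/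
def krAux {D : ℕ} {n : Fin D → ℕ} (X : (d : Fin D) → Matrix (Fin (n d)) (Fin (n d)) ℝ) :
    Matrix ((d : Fin D) → Fin (n d)) ((d : Fin D) → Fin (n d)) ℝ :=
  fun i j => ∏ d, X d (i d) (j d)

def chopAux {D : ℕ} {n : Fin D → ℕ} (S : Finset ((d : Fin D) → Fin (n d)))
    (M : Matrix ((d : Fin D) → Fin (n d)) ((d : Fin D) → Fin (n d)) ℝ) : Matrix S S ℝ :=
  M.submatrix (fun i : ↥S => (i : (d : Fin D) → Fin (n d)))
        (fun j : ↥S => (j : (d : Fin D) → Fin (n d)))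

def LowAux {D : ℕ} {n : Fin D → ℕ} (X : (d : Fin D) → Matrix (Fin (n d)) (Fin (n d)) ℝ) : Prop :=
  ∀ d, ∀ a b : Fin (n d), X d a b ≠ 0 → b ≤ a

def UppAux {D : ℕ} {n : Fin D → ℕ} (X : (d : Fin D) → Matrix (Fin (n d)) (Fin (n d)) ℝ) : Prop :=
  ∀ d, ∀ a b : Fin (n d), X d a b ≠ 0 → a ≤ b

theorem krAux_mul {D : ℕ} {n : Fin D → ℕ} (X Y : (d : Fin D) → Matrix (Fin (n d)) (Fin (n d)) ℝ) :
    krAux X * krAux Y = krAux (fun d => X d * Y d) := by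
  ext i j
  simp only [krAux, Matrix.mul_apply, Finset.prod_univ_sum, Fintype.piFinset_univ,
    Finset.prod_mul_distrib]

theorem chopAux_mul {D : ℕ} {n : Fin D → ℕ} (S : Finset ((d : Fin D) → Fin (n d)))
    (hS : ∀ ⦃i j : (d : Fin D) → Fin (n d)⦄, (∀ d, i d ≤ j d) → j ∈ S → i ∈ S)
    (X Y : (d : Fin D) → Matrix (Fin (n d)) (Fin (n d)) ℝ) (h : LowAux X ∨ UppAux Y) :
    chopAux S (krAux X) * chopAux S (krAux Y) = chopAux S (krAux (fun d => X d * Y d)) := by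
  rw [← krAux_mul]
  ext i j
  simp only [chopAux, Matrix.mul_apply, Matrix.submatrix_apply]
  rw [Finset.sum_coe_sort S (fun k => krAux X i k * krAux Y k j)]
  apply Finset.sum_subset (Finset.subset_univ _)
  intro k _ hk
  by_contra hne
  have h1 := left_ne_zero_of_mul hne
  have h2 := right_ne_zero_of_mul hne
  simp only [krAux, Finset.prod_ne_zero_iff] at h1 h2
  rcases h with h | h
  · exact hk (hS (fun d => h d _ _ (h1 d (Finset.mem_univ d))) i.2)
  · exact hk (hS (fun d => h d _ _ (h2 d (Finset.mem_univ d))) j.2)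

theorem chopAux_list {D : ℕ} {n : Fin D → ℕ} (S : Finset ((d : Fin D) → Fin (n d)))
    (hS : ∀ ⦃i j : (d : Fin D) → Fin (n d)⦄, (∀ d, i d ≤ j d) → j ∈ S → i ∈ S)
    (M : (d : Fin D) → Matrix (Fin (n d)) (Fin (n d)) ℝ) (h : LowAux M ∨ UppAux M)
    (l : List (Fin D)) (hl : l.Nodup) :
    (l.map (fun d => chopAux S (krAux (fun e => if e = d then M e else 1)))).prod
      = chopAux S (krAux (fun e => if e ∈ l then M e else 1)) := by
  induction l with
  | nil =>
    ext i j
    simp only [List.map_nil, List.prod_nil, chopAux, krAux, Matrix.submatrix_apply,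
      List.not_mem_nil, if_false, Matrix.one_apply]
    rw [Finset.prod_ite_zero]
    have hij : i = j ↔ ∀ d ∈ Finset.univ, i.1 d = j.1 d := by
      constructor
      · rintro rfl d _
        rfl
      · intro h0
        exact Subtype.ext (funext fun d => h0 d (Finset.mem_univ d))
    simp only [hij, Finset.prod_const_one]
  | cons d l ih =>
    rw [List.nodup_cons] at hl
    rw [List.map_cons, List.prod_cons, ih hl.2, chopAux_mul S hS]
    · congr 2
      funext e
      by_cases he : e = d
      · subst he; simp [hl.1]
      · simp [he]
    · refine h.imp (fun h e a b => ?_) (fun h e a b => ?_)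
      all_goals
        dsimp only
        split_ifs
        · exact h e a b
        · intro h0
          by_contra h1
          exact h0 (Matrix.one_apply_ne (by rintro rfl; exact h1 le_rfl))

theorem bracketAux {D : ℕ} {n : Fin D → ℕ}
    (M : (d : Fin D) → Matrix (Fin (n d)) (Fin (n d)) ℝ)
    (b : (d : Fin D) → Matrix ((d : Fin D) → Fin (n d)) ((d : Fin D) → Fin (n d)) ℝ)
    (hb : ∀ d i j, b d i j =
      M d (i d) (j d) * ∏ d' ∈ Finset.univ.erase d, (if i d' = j d' then (1 : ℝ) else 0))
    (d : Fin D) : b d = krAux (fun e => if e = d then M e else 1) := by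
  ext i j
  rw [hb, krAux, ← Finset.mul_prod_erase _ _ (Finset.mem_univ d)]
  simp only [if_true]
  congr 1
  apply Finset.prod_congr rfl
  intro e he
  rw [if_neg (Finset.ne_of_mem_erase he), Matrix.one_apply]

/-- Over a downward-closed (CUD) set `S` of multi-indices, the chop of the
Kronecker product `𝐀 = ⊗_d (L⁽ᵈ⁾ U⁽ᵈ⁾)` equals the ordered product of the chops of the
one-mode bracket matrices `𝐋⁽ᵈ⁾` followed by the ordered product of the chops of the
one-mode bracket matrices `𝐔⁽ᵈ⁾`, where `L⁽ᵈ⁾` is lower and `U⁽ᵈ⁾` upper triangular. -/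
theorem chopped_kronecker_LU (D : ℕ) (n : Fin D → ℕ)
    (L U : (d : Fin D) → Matrix (Fin (n d)) (Fin (n d)) ℝ)
    (hLt : ∀ d, ∀ a b : Fin (n d), L d a b ≠ 0 → b ≤ a)
    (hUt : ∀ d, ∀ a b : Fin (n d), U d a b ≠ 0 → a ≤ b)
    (S : Finset ((d : Fin D) → Fin (n d)))
    (hS : ∀ ⦃i j : (d : Fin D) → Fin (n d)⦄, (∀ d, i d ≤ j d) → j ∈ S → i ∈ S)
    (bL bU : (d : Fin D) →
      Matrix ((d : Fin D) → Fin (n d)) ((d : Fin D) → Fin (n d)) ℝ)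
    (hbL : ∀ d i j, bL d i j =
      L d (i d) (j d) * ∏ d' ∈ Finset.univ.erase d, (if i d' = j d' then (1 : ℝ) else 0))
    (hbU : ∀ d i j, bU d i j =
      U d (i d) (j d) * ∏ d' ∈ Finset.univ.erase d, (if i d' = j d' then (1 : ℝ) else 0))
    (bigA : Matrix ((d : Fin D) → Fin (n d)) ((d : Fin D) → Fin (n d)) ℝ)
    (hbigA : ∀ i j, bigA i j = ∏ d, (L d * U d) (i d) (j d)) :
    bigA.submatrix (fun i : ↥S => (i : (d : Fin D) → Fin (n d)))
        (fun j : ↥S => (j : (d : Fin D) → Fin (n d))) =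
      ((List.finRange D).map (fun d =>
          (bL d).submatrix (fun i : ↥S => (i : (d : Fin D) → Fin (n d)))
            (fun j : ↥S => (j : (d : Fin D) → Fin (n d))))).prod *
        ((List.finRange D).map (fun d =>
          (bU d).submatrix (fun i : ↥S => (i : (d : Fin D) → Fin (n d)))
            (fun j : ↥S => (j : (d : Fin D) → Fin (n d))))).prod := by
  have h1 := chopAux_list S hS L (Or.inl hLt) _ (List.nodup_finRange D)
  have h2 := chopAux_list S hS U (Or.inr hUt) _ (List.nodup_finRange D)
  simp only [← bracketAux L bL hbL, ← bracketAux U bU hbU, List.mem_finRange, if_true] at h1 h2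
  have h3 := chopAux_mul S hS L U (Or.inl hLt)
  rw [← h1, ← h2] at h3
  have h4 : bigA = krAux (fun d => L d * U d) := by
    ext i j
    exact hbigA i j
  rw [h4]
  exact h3.symm
end

section
/- Let D be a natural number, n : Fin D → ℕ, and for each d let L⁽ᵈ⁾ and U⁽ᵈ⁾ be invertible (n d)-by-(n d) real matrices with L⁽ᵈ⁾ lower triangular and U⁽ᵈ⁾ upper triangular with respect to the natural order on Fin (n d). Let S be a nonempty set of multi-indices (functions i with i d ∈ Fin (n d)) that is downward closed with respect to the coordinatewise order, and let 𝐊 i j = Π_{d} (L⁽ᵈ⁾·U⁽ᵈ⁾) (i d) (j d). Then the chop K̂ of 𝐊 to S is invertible, and K̂⁻¹ equals the ordered product over d = 0, …, D−1 of the chops to S of the one-mode bracket matrices built from (U⁽ᵈ⁾)⁻¹, followed by the ordered product over d = 0, …, D−1 of the chops to S of the one-mode bracket matrices built from (L⁽ᵈ⁾)⁻¹. -/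
namespace ChopAux

variable {D : ℕ} {n : Fin D → ℕ}

/-- Kronecker product of a family of matrices. -/
def kron (A : (d : Fin D) → Matrix (Fin (n d)) (Fin (n d)) ℝ) :
    Matrix ((d : Fin D) → Fin (n d)) ((d : Fin D) → Fin (n d)) ℝ :=
  fun i j => ∏ d, A d (i d) (j d)

/-- Restriction to `S`. -/
def chop (S : Finset ((d : Fin D) → Fin (n d)))
    (M : Matrix ((d : Fin D) → Fin (n d)) ((d : Fin D) → Fin (n d)) ℝ) : Matrix S S ℝ :=
  M.submatrix (fun i : ↥S => (i : (d : Fin D) → Fin (n d)))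
    (fun j : ↥S => (j : (d : Fin D) → Fin (n d)))

lemma kron_mul (A B : (d : Fin D) → Matrix (Fin (n d)) (Fin (n d)) ℝ) :
    kron A * kron B = kron (fun d => A d * B d) := by
  ext i j
  simp only [kron, Matrix.mul_apply]
  rw [Finset.prod_univ_sum]
  simp [Finset.prod_mul_distrib]

lemma kron_one : kron (fun d => (1 : Matrix (Fin (n d)) (Fin (n d)) ℝ)) = 1 := by
  ext i j
  simp only [kron, Matrix.one_apply, Fintype.prod_ite_zero, funext_iff, Finset.prod_const_one]

lemma chop_mul (S : Finset ((d : Fin D) → Fin (n d)))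
    (M N : Matrix ((d : Fin D) → Fin (n d)) ((d : Fin D) → Fin (n d)) ℝ)
    (h : ∀ i ∈ S, ∀ j ∈ S, ∀ k, M i k * N k j ≠ 0 → k ∈ S) :
    chop S M * chop S N = chop S (M * N) := by
  ext i j
  simp only [chop, Matrix.mul_apply, Matrix.submatrix_apply]
  rw [Finset.sum_coe_sort S (fun k => M i k * N k j)]
  refine Finset.sum_subset (Finset.subset_univ _) ?_
  intro k _ hk
  by_contra h0
  exact hk (h i i.2 j j.2 k h0)

lemma chop_one (S : Finset ((d : Fin D) → Fin (n d))) : chop S 1 = 1 := by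
  ext i j
  simp only [chop, Matrix.submatrix_apply, Matrix.one_apply, Subtype.coe_inj]

lemma chop_mul_lower (S : Finset ((d : Fin D) → Fin (n d)))
    (hS : ∀ ⦃i j : (d : Fin D) → Fin (n d)⦄, (∀ d, i d ≤ j d) → j ∈ S → i ∈ S)
    (A B : (d : Fin D) → Matrix (Fin (n d)) (Fin (n d)) ℝ)
    (hA : ∀ d, ∀ a b : Fin (n d), A d a b ≠ 0 → b ≤ a) :
    chop S (kron A) * chop S (kron B) = chop S (kron (fun d => A d * B d)) := by
  rw [← kron_mul]
  refine chop_mul S _ _ fun i hi j _ k hk => hS (fun d => ?_) hi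
  exact hA d _ _ (Finset.prod_ne_zero_iff.1 (left_ne_zero_of_mul hk) d (Finset.mem_univ d))

lemma chop_mul_upper (S : Finset ((d : Fin D) → Fin (n d)))
    (hS : ∀ ⦃i j : (d : Fin D) → Fin (n d)⦄, (∀ d, i d ≤ j d) → j ∈ S → i ∈ S)
    (A B : (d : Fin D) → Matrix (Fin (n d)) (Fin (n d)) ℝ)
    (hB : ∀ d, ∀ a b : Fin (n d), B d a b ≠ 0 → a ≤ b) :
    chop S (kron A) * chop S (kron B) = chop S (kron (fun d => A d * B d)) := by
  rw [← kron_mul]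
  refine chop_mul S _ _ fun i _ j hj k hk => hS (fun d => ?_) hj
  exact hB d _ _ (Finset.prod_ne_zero_iff.1 (right_ne_zero_of_mul hk) d (Finset.mem_univ d))

lemma bracket_eq (A : (d : Fin D) → Matrix (Fin (n d)) (Fin (n d)) ℝ)
    (M : Matrix ((d : Fin D) → Fin (n d)) ((d : Fin D) → Fin (n d)) ℝ) (d : Fin D)
    (hM : ∀ i j, M i j =
      A d (i d) (j d) * ∏ d' ∈ Finset.univ.erase d, (if i d' = j d' then (1 : ℝ) else 0)) :
    M = kron (fun d' => if d' = d then A d' else 1) := by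
  ext i j
  rw [hM, kron, ← Finset.mul_prod_erase Finset.univ _ (Finset.mem_univ d), if_pos rfl]
  congr 1
  refine Finset.prod_congr rfl fun d' hd' => ?_
  rw [if_neg (Finset.ne_of_mem_erase hd'), Matrix.one_apply]

lemma list_prod (S : Finset ((d : Fin D) → Fin (n d)))
    (A : (d : Fin D) → Matrix (Fin (n d)) (Fin (n d)) ℝ)
    (b : (d : Fin D) → Matrix ((d : Fin D) → Fin (n d)) ((d : Fin D) → Fin (n d)) ℝ)
    (hb : ∀ d i j, b d i j =
      A d (i d) (j d) * ∏ d' ∈ Finset.univ.erase d, (if i d' = j d' then (1 : ℝ) else 0))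
    (hmul : ∀ s t : Fin D → Prop, ∀ [DecidablePred s] [DecidablePred t],
      chop S (kron (fun d => if s d then A d else 1)) *
        chop S (kron (fun d => if t d then A d else 1)) =
      chop S (kron (fun d => (if s d then A d else 1) * (if t d then A d else 1))))
    (l : List (Fin D)) (hl : l.Nodup) :
    (l.map (fun d => chop S (b d))).prod = chop S (kron (fun d => if d ∈ l then A d else 1)) := by
  induction l with
  | nil => simp [kron_one, chop_one]
  | cons x l ih =>
    rw [List.nodup_cons] at hl
    rw [List.map_cons, List.prod_cons, ih hl.2, bracket_eq A (b x) x (hb x),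
      hmul (fun d => d = x) (fun d => d ∈ l)]
    congr 2
    funext d
    by_cases h : d = x
    · subst h; simp [hl.1]
    · simp [h]

lemma inv_upper {m : ℕ} (M : Matrix (Fin m) (Fin m) ℝ) (hu : IsUnit M)
    (h : ∀ a b, M a b ≠ 0 → a ≤ b) : ∀ a b, M⁻¹ a b ≠ 0 → a ≤ b := by
  have := hu.invertible
  have hT : M.BlockTriangular id := fun a b hab => by
    by_contra h0
    exact absurd (h a b h0) (not_le.2 hab)
  intro a b h0
  by_contra hab
  exact h0 (Matrix.blockTriangular_inv_of_blockTriangular hT (not_le.1 hab))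

lemma inv_lower {m : ℕ} (M : Matrix (Fin m) (Fin m) ℝ) (hu : IsUnit M)
    (h : ∀ a b, M a b ≠ 0 → b ≤ a) : ∀ a b, M⁻¹ a b ≠ 0 → b ≤ a := by
  intro a b h0
  refine inv_upper M.transpose ((Matrix.isUnit_transpose _).2 hu) (fun a b h1 => h b a h1) b a ?_
  rwa [← Matrix.transpose_nonsing_inv]

end ChopAux

/-- Direct inversion of a separable kernel over an incomplete grid: for a
nonempty downward-closed (CUD) set `S` of multi-indices and invertible lower/upper
triangular factors `L⁽ᵈ⁾`, `U⁽ᵈ⁾`, the chop `K̂` of `𝐊 = ⊗_d (L⁽ᵈ⁾ U⁽ᵈ⁾)` to `S` is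
invertible, and `K̂⁻¹` is the ordered product of the chops of the one-mode bracket
matrices built from `(U⁽ᵈ⁾)⁻¹` followed by those built from `(L⁽ᵈ⁾)⁻¹`. -/
theorem chopped_kernel_inverse (D : ℕ) (n : Fin D → ℕ)
    (L U : (d : Fin D) → Matrix (Fin (n d)) (Fin (n d)) ℝ)
    (hLunit : ∀ d, IsUnit (L d)) (hUunit : ∀ d, IsUnit (U d))
    (hLt : ∀ d, ∀ a b : Fin (n d), L d a b ≠ 0 → b ≤ a)
    (hUt : ∀ d, ∀ a b : Fin (n d), U d a b ≠ 0 → a ≤ b)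
    (S : Finset ((d : Fin D) → Fin (n d))) (hSne : S.Nonempty)
    (hS : ∀ ⦃i j : (d : Fin D) → Fin (n d)⦄, (∀ d, i d ≤ j d) → j ∈ S → i ∈ S)
    (bLinv bUinv : (d : Fin D) →
      Matrix ((d : Fin D) → Fin (n d)) ((d : Fin D) → Fin (n d)) ℝ)
    (hbLinv : ∀ d i j, bLinv d i j =
      (L d)⁻¹ (i d) (j d) * ∏ d' ∈ Finset.univ.erase d, (if i d' = j d' then (1 : ℝ) else 0))
    (hbUinv : ∀ d i j, bUinv d i j =
      (U d)⁻¹ (i d) (j d) * ∏ d' ∈ Finset.univ.erase d, (if i d' = j d' then (1 : ℝ) else 0))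
    (bigK : Matrix ((d : Fin D) → Fin (n d)) ((d : Fin D) → Fin (n d)) ℝ)
    (hbigK : ∀ i j, bigK i j = ∏ d, (L d * U d) (i d) (j d)) :
    IsUnit (bigK.submatrix (fun i : ↥S => (i : (d : Fin D) → Fin (n d)))
        (fun j : ↥S => (j : (d : Fin D) → Fin (n d)))) ∧
      (bigK.submatrix (fun i : ↥S => (i : (d : Fin D) → Fin (n d)))
          (fun j : ↥S => (j : (d : Fin D) → Fin (n d))))⁻¹ =
        ((List.finRange D).map (fun d =>
            (bUinv d).submatrix (fun i : ↥S => (i : (d : Fin D) → Fin (n d)))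
              (fun j : ↥S => (j : (d : Fin D) → Fin (n d))))).prod *
          ((List.finRange D).map (fun d =>
            (bLinv d).submatrix (fun i : ↥S => (i : (d : Fin D) → Fin (n d)))
              (fun j : ↥S => (j : (d : Fin D) → Fin (n d))))).prod := by
  have hLi := fun d => ChopAux.inv_lower (L d) (hLunit d) (hLt d)
  have hUi := fun d => ChopAux.inv_upper (U d) (hUunit d) (hUt d)
  have hK : bigK = ChopAux.kron (fun d => L d * U d) := by
    ext i j
    exact hbigK i j
  have eL := ChopAux.list_prod S (fun d => (L d)⁻¹) bLinv hbLinv (by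
    intro s t _ _
    refine ChopAux.chop_mul_lower S hS _ _ fun d a b h => ?_
    split_ifs at h
    · exact hLi d a b h
    · by_contra hab
      exact h (Matrix.one_apply_ne (fun e => hab e.ge))) (List.finRange D) (List.nodup_finRange D)
  have eU := ChopAux.list_prod S (fun d => (U d)⁻¹) bUinv hbUinv (by
    intro s t _ _
    refine ChopAux.chop_mul_upper S hS _ _ fun d a b h => ?_
    split_ifs at h
    · exact hUi d a b h
    · by_contra hab
      exact h (Matrix.one_apply_ne (fun e => hab e.le))) (List.finRange D) (List.nodup_finRange D)
  simp only [List.mem_finRange, if_true] at eL eU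
  have key : ChopAux.chop S bigK *
      (((List.finRange D).map (fun d => ChopAux.chop S (bUinv d))).prod *
        ((List.finRange D).map (fun d => ChopAux.chop S (bLinv d))).prod) = 1 := by
    rw [eL, eU, hK, ← ChopAux.chop_mul_lower S hS L U hLt, Matrix.mul_assoc,
      ← Matrix.mul_assoc (ChopAux.chop S (ChopAux.kron U)),
      ChopAux.chop_mul_upper S hS U _ hUi]
    have h1 : (fun d => U d * (U d)⁻¹) = fun d => 1 := funext fun d =>
      Matrix.mul_nonsing_inv _ ((Matrix.isUnit_iff_isUnit_det _).1 (hUunit d))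
    have h2 : (fun d => L d * (L d)⁻¹) = fun d => 1 := funext fun d =>
      Matrix.mul_nonsing_inv _ ((Matrix.isUnit_iff_isUnit_det _).1 (hLunit d))
    rw [h1, ChopAux.kron_one, ChopAux.chop_one, Matrix.one_mul,
      ChopAux.chop_mul_lower S hS L _ hLt, h2, ChopAux.kron_one, ChopAux.chop_one]
  exact ⟨IsUnit.of_mul_eq_one _ key, Matrix.inv_eq_right_inv key⟩
end
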